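/- Let R be a noetherian commutative ring of Krull dimension n. Then every flat R-module has projective dimension at most n, and consequently every flat R-module has cotorsion dimension at most n. -/

import Mathlib

open CategoryTheory

universe u

section Defs

variable (R : Type u) [CommRing R]

/-- A linear map is a pure monomorphism if it is injective and stays injective
after tensoring with any module. -/
def IsPureMono {A B : Type u} [AddCommGroup A] [Module R A] [AddCommGroup B] [Module R B]
    (f : A →ₗ[R] B) : Prop :=
  Function.Injective f ∧
    ∀ (P : Type u) [AddCommGroup P] [Module R P],
      Function.Injective (LinearMap.rTensor P f)

/-- A module is pure injective if it is injective with respect to pure monomorphisms. -/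
def IsPureInjective (E : Type u) [AddCommGroup E] [Module R E] : Prop :=
  ∀ ⦃A B : Type u⦄ [AddCommGroup A] [Module R A] [AddCommGroup B] [Module R B]
    (f : A →ₗ[R] B), IsPureMono R f →
      ∀ g : A →ₗ[R] E, ∃ h : B →ₗ[R] E, h.comp f = g

/-- Vanishing of `Ext^n`. -/
def extVanish (n : ℕ) (M N : Type u) [AddCommGroup M] [Module R M]
    [AddCommGroup N] [Module R N] : Prop :=
  Subsingleton (((Ext R (ModuleCat.{u} R) n).obj
    (Opposite.op (ModuleCat.of R M))).obj (ModuleCat.of R N))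

/-- A module `C` is cotorsion if `Ext¹(F, C) = 0` for every flat module `F`. -/
def IsCotorsion (C : Type u) [AddCommGroup C] [Module R C] : Prop :=
  ∀ (F : Type u) [AddCommGroup F] [Module R F], Module.Flat R F →
    extVanish R 1 F C

/-- Short exact sequence of modules. -/
def IsShortExact {A B C : Type u} [AddCommGroup A] [Module R A] [AddCommGroup B] [Module R B]
    [AddCommGroup C] [Module R C] (f : A →ₗ[R] B) (g : B →ₗ[R] C) : Prop :=
  Function.Injective f ∧ Function.Surjective g ∧ LinearMap.ker g = LinearMap.range f

/-- Pure short exact sequence. -/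
def IsPureShortExact {A B C : Type u} [AddCommGroup A] [Module R A] [AddCommGroup B]
    [Module R B] [AddCommGroup C] [Module R C] (f : A →ₗ[R] B) (g : B →ₗ[R] C) : Prop :=
  IsShortExact R f g ∧
    ∀ (P : Type u) [AddCommGroup P] [Module R P],
      Function.Injective (LinearMap.rTensor P f)

/-- A cotorsion resolution `0 → M → C⁰ → ⋯ → Cⁿ → 0` of length `n`. -/
structure CotorsionResolution (M : Type u) [AddCommGroup M] [Module R M] (n : ℕ) where
  C : ℕ → Type u
  [acg : ∀ i, AddCommGroup (C i)]
  [mod : ∀ i, Module R (C i)]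
  f : M →ₗ[R] C 0
  d : ∀ i, C i →ₗ[R] C (i + 1)
  hf : Function.Injective f
  hd0 : LinearMap.ker (d 0) = LinearMap.range f
  hd : ∀ i, LinearMap.ker (d (i + 1)) = LinearMap.range (d i)
  hcot : ∀ i, IsCotorsion R (C i)
  htail : ∀ i, n < i → Subsingleton (C i)

/-- `M` has cotorsion dimension at most `n`. -/
def cotorsionDimLE (M : Type u) [AddCommGroup M] [Module R M] (n : ℕ) : Prop :=
  Nonempty (CotorsionResolution R M n)

/-- A pure injective resolution `0 → M → E⁰ → ⋯ → Eⁿ → 0` of length `n`,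
pure exact in each degree. -/
structure PureInjectiveResolution (M : Type u) [AddCommGroup M] [Module R M] (n : ℕ) where
  E : ℕ → Type u
  [acg : ∀ i, AddCommGroup (E i)]
  [mod : ∀ i, Module R (E i)]
  f : M →ₗ[R] E 0
  d : ∀ i, E i →ₗ[R] E (i + 1)
  hf : Function.Injective f
  hd0 : LinearMap.ker (d 0) = LinearMap.range f
  hd : ∀ i, LinearMap.ker (d (i + 1)) = LinearMap.range (d i)
  hpinj : ∀ i, IsPureInjective R (E i)
  htail : ∀ i, n < i → Subsingleton (E i)
  pure : ∀ (P : Type u) [AddCommGroup P] [Module R P],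
    Function.Injective (LinearMap.rTensor P f) ∧
    LinearMap.ker (LinearMap.rTensor P (d 0)) = LinearMap.range (LinearMap.rTensor P f) ∧
    ∀ i, LinearMap.ker (LinearMap.rTensor P (d (i + 1))) =
      LinearMap.range (LinearMap.rTensor P (d i))

/-- `M` has pure injective dimension at most `n`. -/
def pureInjDimLE (M : Type u) [AddCommGroup M] [Module R M] (n : ℕ) : Prop :=
  Nonempty (PureInjectiveResolution R M n)

end Defs

/-- A projective resolution `0 → Pₙ → ⋯ → P₀ → M → 0` of length `n`. -/
structure FiniteProjectiveResolution (R : Type u) [CommRing R]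
    (M : Type u) [AddCommGroup M] [Module R M] (n : ℕ) where
  P : ℕ → Type u
  [acg : ∀ i, AddCommGroup (P i)]
  [mod : ∀ i, Module R (P i)]
  π : P 0 →ₗ[R] M
  d : ∀ i, P (i + 1) →ₗ[R] P i
  hπ : Function.Surjective π
  hd0 : LinearMap.ker π = LinearMap.range (d 0)
  hd : ∀ i, LinearMap.ker (d i) = LinearMap.range (d (i + 1))
  hproj : ∀ i, Module.Projective R (P i)
  htail : ∀ i, n < i → Subsingleton (P i)

/-!
Let `R` be noetherian, `G` a flat module and `S` a set of primes, and let `E p` be the injective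
hull of `R ⧸ p`. The product over `p ∈ S` of the modules
`Hom(E p, G ⊗ E p)` is flat and cotorsion. If `pG = G` for all primes `p ∉ S`, then the canonical
map from `G` to this product is injective modulo every prime, hence a pure embedding with flat
cokernel `Q`, and `qQ = Q` for every prime `q` not strictly contained in a member of `S`. With `S`
the set of primes of height at most `j`, for `j = n, n - 1, …, 0`, this gives a cotorsion resolution
of `G`: a module `Q` with `qQ = Q` for all primes `q` vanishes.

So all flat modules have cotorsion dimension at most `n`, whence `Ext^(n+1)(F, G) = 0` for `F` and
`G` flat. Syzygies of flat modules are flat, so the `n`-th syzygy of `F` is a direct summand of a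
free module, that is, the projective dimension of `F` is at most `n`.
-/

section ExtOfModules

variable {R : Type u} [CommRing R] {M N F C : Type u} [AddCommGroup M] [Module R M]
  [AddCommGroup N] [Module R N] [AddCommGroup F] [Module R F] [AddCommGroup C] [Module R C]

theorem extVanish_succ_iff (n : ℕ) :
    extVanish R (n + 1) M N ↔
      Subsingleton (Abelian.Ext (ModuleCat.of R M) (ModuleCat.of R N) (n + 1)) := by
  let P := projectiveResolution (ModuleCat.of R M)
  have hom_exact : extVanish R (n + 1) M N ↔
      ∀ f : P.complex.X (n + 1) ⟶ ModuleCat.of R N, P.complex.d (n + 2) (n + 1) ≫ f = 0 →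
        ∃ g : P.complex.X n ⟶ ModuleCat.of R N, P.complex.d (n + 1) n ≫ g = f := by
    rw [extVanish, ← ModuleCat.isZero_iff_subsingleton,
      (P.isoExt (n + 1) (ModuleCat.of R N)).isZero_iff,
      ← HomologicalComplex.exactAt_iff_isZero_homology,
      HomologicalComplex.exactAt_iff' _ n (n + 1) (n + 2) (by simp) (by simp),
      ShortComplex.moduleCat_exact_iff]
    rfl
  rw [hom_exact]
  constructor
  · refine fun h ↦ subsingleton_of_forall_eq 0 fun x ↦ ?_
    obtain ⟨f, hf, rfl⟩ := P.extMk_surjective x (n + 2) rfl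
    exact (P.extMk_eq_zero_iff f _ rfl hf n rfl).2 (h f hf)
  · exact fun _ f hf ↦ (P.extMk_eq_zero_iff f _ rfl hf n rfl).1 (Subsingleton.elim _ _)

theorem subsingleton_ext_one_of_forall_extend
    {P : Type u} [AddCommGroup P] [Module R P] [Module.Projective R P] {π : P →ₗ[R] M}
    (hπ : Function.Surjective π)
    (hextend : ∀ f : LinearMap.ker π →ₗ[R] N, ∃ g : P →ₗ[R] N, g ∘ₗ (LinearMap.ker π).subtype = f) :
    Subsingleton (Abelian.Ext (ModuleCat.of R M) (ModuleCat.of R N) 1) := by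
  have hS := LinearMap.shortExact_shortComplexKer hπ
  refine subsingleton_of_forall_eq 0 fun x ↦ ?_
  obtain ⟨x₁, rfl⟩ := Abelian.Ext.contravariant_sequence_exact₃ hS _ x
    (Abelian.Ext.eq_zero_of_projective (P := ModuleCat.of R P) _) (add_zero 1)
  obtain ⟨f, rfl⟩ := Abelian.Ext.mk₀_bijective _ _ |>.2 x₁
  obtain ⟨g, hg⟩ := hextend f.hom
  obtain rfl : (ModuleCat.ofHom (LinearMap.ker π).subtype) ≫ ModuleCat.ofHom g = f :=
    ModuleCat.hom_ext hg
  rw [← Abelian.Ext.mk₀_comp_mk₀]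
  exact hS.extClass_comp_assoc _

theorem isCotorsion_iff_forall_extend :
    IsCotorsion R C ↔ ∀ (P F : Type u) [AddCommGroup P] [Module R P] [AddCommGroup F] [Module R F]
      [Module.Flat R F] (π : P →ₗ[R] F), Function.Surjective π →
        ∀ f : LinearMap.ker π →ₗ[R] C, ∃ g : P →ₗ[R] C, g ∘ₗ (LinearMap.ker π).subtype = f := by
  refine ⟨fun hC P F _ _ _ _ hF π hπ f ↦ ?_, fun h F _ _ hF ↦ (extVanish_succ_iff 0).2 ?_⟩
  · have hS := LinearMap.shortExact_shortComplexKer hπ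
    have := (extVanish_succ_iff 0).1 (hC F hF)
    obtain ⟨x, hx⟩ := Abelian.Ext.contravariant_sequence_exact₁ hS _
      (Abelian.Ext.mk₀ (ModuleCat.ofHom f)) (add_zero 1) (Subsingleton.elim _ _)
    obtain ⟨g, rfl⟩ := (Abelian.Ext.mk₀_bijective _ _).2 x
    rw [Abelian.Ext.mk₀_comp_mk₀] at hx
    exact ⟨g.hom, congrArg ModuleCat.Hom.hom ((Abelian.Ext.mk₀_bijective _ _).1 hx)⟩
  · exact subsingleton_ext_one_of_forall_extend (Finsupp.linearCombination_id_surjective R F)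
      (h (F →₀ R) F _ (Finsupp.linearCombination_id_surjective R F))

theorem IsCotorsion.of_linearEquiv {D : Type u} [AddCommGroup D] [Module R D]
    (hC : IsCotorsion R C) (e : C ≃ₗ[R] D) : IsCotorsion R D := by
  rw [isCotorsion_iff_forall_extend] at hC ⊢
  intro P F _ _ _ _ _ π hπ f
  obtain ⟨g, hg⟩ := hC P F π hπ (e.symm.toLinearMap ∘ₗ f)
  exact ⟨e.toLinearMap ∘ₗ g, by rw [LinearMap.comp_assoc, hg]; ext; simp⟩

theorem IsCotorsion.pi {ι : Type u} {C : ι → Type u} [∀ i, AddCommGroup (C i)]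
    [∀ i, Module R (C i)] (hC : ∀ i, IsCotorsion R (C i)) : IsCotorsion R (∀ i, C i) := by
  simp only [isCotorsion_iff_forall_extend] at hC ⊢
  intro P F _ _ _ _ _ π hπ f
  choose g hg using fun i ↦ hC i P F π hπ (LinearMap.proj i ∘ₗ f)
  exact ⟨LinearMap.pi g, by ext x i; exact LinearMap.congr_fun (hg i) x⟩

theorem isCotorsion_of_subsingleton [Subsingleton C] : IsCotorsion R C :=
  isCotorsion_iff_forall_extend.2 fun _ _ _ _ _ _ _ _ _ _ ↦ ⟨0, Subsingleton.elim _ _⟩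

-- By the hom-tensor adjunction, extending `K → Hom(Q, J)` to `P` means extending `Q ⊗ K → J` to
-- `Q ⊗ P`, and `Q ⊗ K → Q ⊗ P` is injective because `P / K` is flat.
theorem isCotorsion_linearMap_of_injective {Q J : Type u} [AddCommGroup Q] [Module R Q]
    [AddCommGroup J] [Module R J] [Module.Injective R J] : IsCotorsion R (Q →ₗ[R] J) := by
  refine isCotorsion_iff_forall_extend.2 fun P F _ _ _ _ _ π hπ f ↦ ?_
  have hinj := LinearMap.lTensor_injective_of_exact_of_flat (R := R) π hπ _
    (LinearMap.ker π).subtype_injective (LinearMap.exact_subtype_ker_map π) Q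
  obtain ⟨h, hh⟩ := Module.Injective.extension_property R J _ _ _ hinj (TensorProduct.lift f.flip)
  refine ⟨(TensorProduct.curry h).flip, LinearMap.ext fun x ↦ LinearMap.ext fun q ↦ ?_⟩
  simpa using LinearMap.congr_fun hh (q ⊗ₜ x)

theorem flat_ker_of_surjective {P : Type u} [AddCommGroup P] [Module R P] [Module.Flat R P]
    [Module.Flat R F] {π : P →ₗ[R] F} (hπ : Function.Surjective π) :
    Module.Flat R (LinearMap.ker π) := by
  refine Module.Flat.iff_rTensor_injective'.2 fun I ↦ ?_
  have hker : Function.Injective ((LinearMap.ker π).subtype.lTensor I) :=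
    LinearMap.lTensor_injective_of_exact_of_flat (R := R) π hπ _
      (Submodule.subtype_injective _) (LinearMap.exact_subtype_ker_map _) I
  have hcomp := (Module.Flat.rTensor_preserves_injective_linearMap (M := P) _
    I.subtype_injective).comp hker
  rw [← LinearMap.coe_comp, LinearMap.rTensor_comp_lTensor, ← LinearMap.lTensor_comp_rTensor,
    LinearMap.coe_comp] at hcomp
  exact hcomp.of_comp

variable (R M) in
/-- The first syzygy of `M`, taken with respect to the free module on the set `M`. -/
noncomputable abbrev Syzygy : Submodule R (M →₀ R) :=
  LinearMap.ker (Finsupp.linearCombination R (id : M → M))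

variable (R M) in
theorem shortExact_syzygy :
    (Finsupp.linearCombination R (id : M → M)).shortComplexKer.ShortExact :=
  LinearMap.shortExact_shortComplexKer (Finsupp.linearCombination_id_surjective R M)

instance Syzygy.instFlat [Module.Flat R M] : Module.Flat R (Syzygy R M) :=
  flat_ker_of_surjective (Finsupp.linearCombination_id_surjective R M)

theorem projective_of_subsingleton_ext_syzygy
    [Subsingleton (Abelian.Ext (ModuleCat.of R M) (ModuleCat.of R (Syzygy R M)) 1)] :
    Projective (ModuleCat.of R M) := by
  obtain ⟨σ, hσ⟩ := Abelian.Ext.covariant_sequence_exact₃ _ (shortExact_syzygy R M)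
    (Abelian.Ext.mk₀ (𝟙 (ModuleCat.of R M))) (zero_add 1) (Subsingleton.elim _ _)
  obtain ⟨σ, rfl⟩ := (Abelian.Ext.mk₀_bijective _ _).2 σ
  rw [Abelian.Ext.mk₀_comp_mk₀] at hσ
  have : Projective (ModuleCat.of R (M →₀ R)) := inferInstance
  exact Retract.projective ⟨σ, _, (Abelian.Ext.mk₀_bijective _ _).1 hσ⟩

theorem subsingleton_ext_syzygy {n : ℕ}
    [Subsingleton (Abelian.Ext (ModuleCat.of R M) (ModuleCat.of R N) (n + 2))] :
    Subsingleton (Abelian.Ext (ModuleCat.of R (Syzygy R M)) (ModuleCat.of R N) (n + 1)) := by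
  refine subsingleton_of_forall_eq 0 fun x ↦ ?_
  obtain ⟨y, rfl⟩ := Abelian.Ext.contravariant_sequence_exact₁ (shortExact_syzygy R M) _ x
    (add_comm 1 (n + 1)) (Subsingleton.elim _ _)
  rw [Abelian.Ext.eq_zero_of_projective (P := ModuleCat.of R (M →₀ R)) y, Abelian.Ext.comp_zero]

theorem subsingleton_ext_of_syzygy {n : ℕ}
    [Subsingleton (Abelian.Ext (ModuleCat.of R (Syzygy R M)) (ModuleCat.of R N) (n + 1))] :
    Subsingleton (Abelian.Ext (ModuleCat.of R M) (ModuleCat.of R N) (n + 2)) := by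
  refine subsingleton_of_forall_eq 0 fun x ↦ ?_
  obtain ⟨y, rfl⟩ := Abelian.Ext.contravariant_sequence_exact₃ (shortExact_syzygy R M) _ x
    (Abelian.Ext.eq_zero_of_projective (P := ModuleCat.of R (M →₀ R)) _) (add_comm 1 (n + 1))
  rw [Subsingleton.elim y 0, Abelian.Ext.comp_zero]

theorem IsCotorsion.subsingleton_ext (hC : IsCotorsion R C) [Module.Flat R F] (n : ℕ) :
    Subsingleton (Abelian.Ext (ModuleCat.of R F) (ModuleCat.of R C) (n + 1)) := by
  induction n generalizing F with
  | zero => exact (extVanish_succ_iff 0).1 (hC F ‹_›)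
  | succ n ih =>
    have := ih (F := Syzygy R F)
    exact subsingleton_ext_of_syzygy

/-- The sequence `M, X 0, X 1, …` of modules, from which a resolution is built by adding a term in
degree `0`. Bundled modules carry their instances along the case distinction on the degree. -/
def prependModule (M : ModuleCat.{u} R) (X : ℕ → ModuleCat.{u} R) : ℕ → ModuleCat.{u} R
  | 0 => M
  | i + 1 => X i

theorem cotorsionDimLE_of_exact {n : ℕ} {X : ℕ → ModuleCat.{u} R} {f : M →ₗ[R] C}
    {ε : C →ₗ[R] X 0} {d : ∀ i, X i →ₗ[R] X (i + 1)} (hC : IsCotorsion R C)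
    (hf : Function.Injective f) (hε : LinearMap.ker ε = LinearMap.range f)
    (hd0 : LinearMap.ker (d 0) = LinearMap.range ε)
    (hd : ∀ i, LinearMap.ker (d (i + 1)) = LinearMap.range (d i))
    (hX : ∀ i, IsCotorsion R (X i)) (htail : ∀ i, n ≤ i → Subsingleton (X i)) :
    cotorsionDimLE R M n :=
  ⟨{ C := fun i ↦ prependModule (ModuleCat.of R C) X i
     f := f
     d := fun | 0 => ε | i + 1 => d i
     hf := hf
     hd0 := hε
     hd := fun | 0 => hd0 | i + 1 => hd i
     hcot := fun | 0 => hC | i + 1 => hX i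
     htail := fun | i + 1, hi => htail i (Nat.le_of_lt_succ hi) }⟩

theorem cotorsionDimLE_zero_iff : cotorsionDimLE R M 0 ↔ IsCotorsion R M := by
  constructor
  · rintro ⟨X⟩
    let := X.acg
    let := X.mod
    have := X.htail 1 one_pos
    have hsurj : Function.Surjective X.f := by
      rw [← LinearMap.range_eq_top, ← X.hd0, Subsingleton.elim (X.d 0) 0, LinearMap.ker_zero]
    exact (X.hcot 0).of_linearEquiv (LinearEquiv.ofBijective X.f ⟨X.hf, hsurj⟩).symm
  · intro hM
    exact cotorsionDimLE_of_exact hM (X := fun _ ↦ ModuleCat.of R PUnit) (f := .id) (ε := 0)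
      (d := fun _ ↦ 0) Function.injective_id (LinearMap.ker_zero.trans LinearMap.range_id.symm)
      (Subsingleton.elim _ _) (fun _ ↦ Subsingleton.elim _ _) (fun _ ↦ isCotorsion_of_subsingleton)
      fun _ _ ↦ inferInstanceAs (Subsingleton PUnit)

theorem cotorsionDimLE_succ_of_injective {n : ℕ} {θ : M →ₗ[R] C} (hC : IsCotorsion R C)
    (hθ : Function.Injective θ) (h : cotorsionDimLE R (C ⧸ LinearMap.range θ) n) :
    cotorsionDimLE R M (n + 1) := by
  obtain ⟨X⟩ := h
  let := X.acg
  let := X.mod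
  exact cotorsionDimLE_of_exact hC (X := fun i ↦ ModuleCat.of R (X.C i))
    (ε := X.f ∘ₗ (LinearMap.range θ).mkQ) (d := X.d) hθ
    (by rw [LinearMap.ker_comp_of_ker_eq_bot _ (LinearMap.ker_eq_bot.2 X.hf), Submodule.ker_mkQ])
    (X.hd0.trans (LinearMap.range_comp_of_range_eq_top _ (Submodule.range_mkQ _)).symm)
    X.hd X.hcot fun i hi ↦ X.htail i (Nat.lt_of_succ_le hi)

theorem cotorsionDimLE.exists_isCotorsion_of_succ {n : ℕ} (h : cotorsionDimLE R M (n + 1)) :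
    ∃ (C : Type u) (_ : AddCommGroup C) (_ : Module R C) (θ : M →ₗ[R] C),
      IsCotorsion R C ∧ Function.Injective θ ∧ cotorsionDimLE R (C ⧸ LinearMap.range θ) n := by
  obtain ⟨X⟩ := h
  let := X.acg
  let := X.mod
  exact ⟨X.C 0, _, _, X.f, X.hcot 0, X.hf,
   ⟨{ C := fun i ↦ X.C (i + 1)
      f := (LinearMap.range X.f).liftQ (X.d 0) X.hd0.ge
      d := fun i ↦ X.d (i + 1)
      hf := LinearMap.ker_eq_bot.1 (Submodule.ker_liftQ_eq_bot _ _ _ X.hd0.le)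
      hd0 := (X.hd 0).trans (Submodule.range_liftQ _ _ _).symm
      hd := fun i ↦ X.hd (i + 1)
      hcot := fun i ↦ X.hcot (i + 1)
      htail := fun i hi ↦ X.htail (i + 1) (Nat.succ_lt_succ hi) }⟩⟩

theorem cotorsionDimLE.subsingleton_ext {n : ℕ} (h : cotorsionDimLE R M n) [Module.Flat R F] :
    Subsingleton (Abelian.Ext (ModuleCat.of R F) (ModuleCat.of R M) (n + 1)) := by
  induction n generalizing M with
  | zero => exact (cotorsionDimLE_zero_iff.1 h).subsingleton_ext 0
  | succ n ih =>
    obtain ⟨C, _, _, θ, hC, hθ, hquot⟩ := h.exists_isCotorsion_of_succ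
    have := hC.subsingleton_ext (F := F) (n + 1)
    have := ih hquot
    have hS : (ShortComplex.mk (ModuleCat.ofHom θ) (ModuleCat.ofHom (LinearMap.range θ).mkQ)
        (ModuleCat.hom_ext (LinearMap.range_mkQ_comp θ))).ShortExact :=
      ModuleCat.shortComplex_shortExact _ (LinearMap.exact_map_mkQ_range θ) hθ
        (Submodule.mkQ_surjective _)
    refine subsingleton_of_forall_eq 0 fun x ↦ ?_
    obtain ⟨y, rfl⟩ := Abelian.Ext.covariant_sequence_exact₁ _ hS x (Subsingleton.elim _ _) rfl
    rw [Subsingleton.elim y 0, Abelian.Ext.zero_comp]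

theorem hasProjectiveDimensionLE_of_subsingleton_ext [Module.Flat R F] {n : ℕ}
    (h : ∀ (G : Type u) [AddCommGroup G] [Module R G] [Module.Flat R G],
      Subsingleton (Abelian.Ext (ModuleCat.of R F) (ModuleCat.of R G) (n + 1))) :
    HasProjectiveDimensionLE (ModuleCat.of R F) n := by
  induction n generalizing F with
  | zero =>
    have := h (Syzygy R F)
    exact (projective_iff_hasProjectiveDimensionLE_zero _).1 projective_of_subsingleton_ext_syzygy
  | succ n ih =>
    exact ((shortExact_syzygy R F).hasProjectiveDimensionLT_X₃_iff n
      (inferInstanceAs (Projective (ModuleCat.of R (F →₀ R))))).2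
      (ih fun G _ _ _ ↦ have := h G; subsingleton_ext_syzygy)

theorem nonempty_finiteProjectiveResolution_of_exact {P : Type u} [AddCommGroup P] [Module R P]
    [Module.Projective R P] {n : ℕ} {X : ℕ → ModuleCat.{u} R} {π : P →ₗ[R] M} {ε : X 0 →ₗ[R] P}
    {d : ∀ i, X (i + 1) →ₗ[R] X i} (hπ : Function.Surjective π)
    (hε : LinearMap.ker π = LinearMap.range ε) (hd0 : LinearMap.ker ε = LinearMap.range (d 0))
    (hd : ∀ i, LinearMap.ker (d i) = LinearMap.range (d (i + 1)))
    (hX : ∀ i, Module.Projective R (X i)) (htail : ∀ i, n ≤ i → Subsingleton (X i)) :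
    Nonempty (FiniteProjectiveResolution R M n) :=
  ⟨{ P := fun i ↦ prependModule (ModuleCat.of R P) X i
     π := π
     d := fun | 0 => ε | i + 1 => d i
     hπ := hπ
     hd0 := hε
     hd := fun | 0 => hd0 | i + 1 => hd i
     hproj := fun | 0 => inferInstanceAs (Module.Projective R P) | i + 1 => hX i
     htail := fun | i + 1, hi => htail i (Nat.le_of_lt_succ hi) }⟩

theorem nonempty_finiteProjectiveResolution {n : ℕ}
    [h : HasProjectiveDimensionLE (ModuleCat.of R M) n] :
    Nonempty (FiniteProjectiveResolution R M n) := by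
  induction n generalizing M with
  | zero =>
    have := (IsProjective.iff_projective M).2
      ((projective_iff_hasProjectiveDimensionLE_zero (ModuleCat.of R M)).2 h)
    exact nonempty_finiteProjectiveResolution_of_exact (X := fun _ ↦ ModuleCat.of R PUnit)
      (π := .id) (ε := 0) (d := fun _ ↦ 0) Function.surjective_id
      (LinearMap.ker_id.trans LinearMap.range_zero.symm) (Subsingleton.elim _ _)
      (fun _ ↦ Subsingleton.elim _ _) (fun _ ↦ inferInstanceAs (Module.Projective R PUnit.{u + 1}))
      fun _ _ ↦ inferInstanceAs (Subsingleton PUnit)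
  | succ n ih =>
    have := ((shortExact_syzygy R M).hasProjectiveDimensionLT_X₃_iff n
      (inferInstanceAs (Projective (ModuleCat.of R (M →₀ R))))).1 h
    obtain ⟨X⟩ := ih (M := Syzygy R M)
    let := X.acg
    let := X.mod
    exact nonempty_finiteProjectiveResolution_of_exact (X := fun i ↦ ModuleCat.of R (X.P i))
      (ε := (Submodule.subtype _) ∘ₗ X.π) (d := X.d)
      (Finsupp.linearCombination_id_surjective R M)
      (by rw [LinearMap.range_comp_of_range_eq_top _ (LinearMap.range_eq_top.2 X.hπ),
        Submodule.range_subtype])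
      (by rw [LinearMap.ker_comp_of_ker_eq_bot _ (Submodule.ker_subtype _), X.hd0])
      X.hd X.hproj fun i hi ↦ X.htail i (Nat.lt_of_succ_le hi)

end ExtOfModules

section EssentialExtensions

variable {R M : Type u} [CommRing R] [AddCommGroup M] [Module R M]

/-- The submodule `E` of `M` is an essential extension of the submodule `N`: every nonzero element
of `E` has a nonzero multiple in `N`. -/
def IsEssentialExtension (N E : Submodule R M) : Prop :=
  N ≤ E ∧ ∀ y ∈ E, y ≠ 0 → ∃ r : R, r • y ∈ N ∧ r • y ≠ 0

theorem IsEssentialExtension.refl (N : Submodule R M) : IsEssentialExtension N N :=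
  ⟨le_rfl, fun y hy hy0 ↦ ⟨1, by rwa [one_smul], by rwa [one_smul]⟩⟩

theorem IsEssentialExtension.trans {N E F : Submodule R M} (hNE : IsEssentialExtension N E)
    (hEF : IsEssentialExtension E F) : IsEssentialExtension N F := by
  refine ⟨hNE.1.trans hEF.1, fun y hy hy0 ↦ ?_⟩
  obtain ⟨r, hr, hr0⟩ := hEF.2 y hy hy0
  obtain ⟨s, hs, hs0⟩ := hNE.2 _ hr hr0
  exact ⟨s * r, by rwa [mul_smul], by rwa [mul_smul]⟩

theorem IsEssentialExtension.map {P : Type u} [AddCommGroup P] [Module R P] {N E : Submodule R M}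
    (hNE : IsEssentialExtension N E) {h : M →ₗ[R] P} (hN : Disjoint N (LinearMap.ker h)) :
    IsEssentialExtension (N.map h) (E.map h) := by
  refine ⟨Submodule.map_mono hNE.1, ?_⟩
  rintro _ ⟨x, hx, rfl⟩ hx0
  obtain ⟨r, hr, hr0⟩ := hNE.2 x hx fun h0 ↦ hx0 (by rw [h0, map_zero])
  refine ⟨r, ?_⟩
  rw [← map_smul]
  exact ⟨Submodule.mem_map_of_mem hr, fun h0 ↦ hr0 (Submodule.disjoint_def.1 hN _ hr h0)⟩

theorem exists_maximal_isEssentialExtension (N : Submodule R M) :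
    ∃ E, Maximal (IsEssentialExtension N) E := by
  obtain ⟨E, -, hE⟩ := zorn_le_nonempty₀ {E | IsEssentialExtension N E} (fun c hc hchain E₀ hE₀ ↦ by
    refine ⟨sSup c, ⟨(hc hE₀).1.trans (le_sSup hE₀), fun y hy ↦ ?_⟩, fun _ ↦ le_sSup⟩
    obtain ⟨E, hE, hyE⟩ := (Submodule.mem_sSup_of_directed ⟨E₀, hE₀⟩ hchain.directedOn).1 hy
    exact (hc hE).2 y hyE) N (.refl N)
  exact ⟨E, hE⟩

theorem exists_maximal_disjoint (E : Submodule R M) : ∃ D, Maximal (Disjoint E) D := by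
  obtain ⟨D, -, hD⟩ := zorn_le_nonempty₀ {D | Disjoint E D}
    (fun c hc hchain D₀ _ ↦ ⟨sSup c, hchain.directedOn.disjoint_sSup_right.2 hc,
      fun _ ↦ le_sSup⟩) ⊥ disjoint_bot_right
  exact ⟨D, hD⟩

theorem isEssentialExtension_map_mkQ_of_maximal_disjoint {E D : Submodule R M}
    (hD : Maximal (Disjoint E) D) : IsEssentialExtension (E.map D.mkQ) ⊤ := by
  refine ⟨le_top, fun y _ hy ↦ ?_⟩
  obtain ⟨z, rfl⟩ := D.mkQ_surjective y
  have hz : ¬ Disjoint E (D ⊔ R ∙ z) := fun hdisj ↦ hy <| (Submodule.Quotient.mk_eq_zero D).2 <|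
    hD.le_of_ge hdisj le_sup_left (Submodule.mem_sup_right (Submodule.mem_span_singleton_self z))
  obtain ⟨e, heE, he, he0⟩ : ∃ e ∈ E, e ∈ D ⊔ R ∙ z ∧ e ≠ 0 := by
    simpa [Submodule.disjoint_def] using hz
  obtain ⟨d, hd, _, hrz, rfl⟩ := Submodule.mem_sup.1 he
  obtain ⟨r, rfl⟩ := Submodule.mem_span_singleton.1 hrz
  have hmk : r • D.mkQ z = D.mkQ (d + r • z) := by
    have hd0 : D.mkQ d = 0 := (Submodule.Quotient.mk_eq_zero D).2 hd
    rw [map_add, hd0, zero_add, map_smul]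
  refine ⟨r, hmk ▸ Submodule.mem_map_of_mem heE, fun h0 ↦ he0 ?_⟩
  exact Submodule.disjoint_def.1 hD.prop _ heE
    ((Submodule.Quotient.mk_eq_zero D).1 (hmk.symm.trans h0))

theorem exists_linearMap_extending {A B : Type*} {J : Type u} [AddCommGroup A] [Module R A]
    [AddCommGroup B] [Module R B] [AddCommGroup J] [Module R J] [Module.Injective R J]
    {β : A →ₗ[R] B} {f : A →ₗ[R] J} (h : LinearMap.ker β ≤ LinearMap.ker f) :
    ∃ g : B →ₗ[R] J, g ∘ₗ β = f := by
  obtain ⟨g, hg⟩ := Module.Injective.extension_property R J _ _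
    ((LinearMap.ker β).liftQ β le_rfl)
    (LinearMap.ker_eq_bot.1 (Submodule.ker_liftQ_eq_bot _ _ _ le_rfl))
    ((LinearMap.ker β).liftQ f h)
  exact ⟨g, LinearMap.ext fun x ↦ LinearMap.congr_fun hg (Submodule.Quotient.mk x)⟩

theorem injective_of_retract {A : Type u} [AddCommGroup A] [Module R A] [Module.Injective R M]
    {i : A →ₗ[R] M} {ρ : M →ₗ[R] A} (hρ : ρ ∘ₗ i = LinearMap.id) : Module.Injective R A := by
  refine ⟨fun X Y _ _ _ _ f hf g ↦ ?_⟩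
  obtain ⟨k, hk⟩ := Module.Injective.extension_property R M _ _ f hf (i ∘ₗ g)
  have hg : (ρ ∘ₗ k) ∘ₗ f = g := by
    rw [LinearMap.comp_assoc, hk, ← LinearMap.comp_assoc, hρ, LinearMap.id_comp]
  exact ⟨ρ ∘ₗ k, LinearMap.congr_fun hg⟩

-- For `D` maximal disjoint from `E`, the inclusion of `E` extends to `h : M ⧸ D → M` because `M` is
-- injective; the range of `h` is essential over `E`, hence equal to `E`.
theorem injective_of_maximal_isEssentialExtension [Module.Injective R M] {N E : Submodule R M}
    (hE : Maximal (IsEssentialExtension N) E) : Module.Injective R E := by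
  obtain ⟨D, hD⟩ := exists_maximal_disjoint E
  obtain ⟨h, hh⟩ := exists_linearMap_extending (β := D.mkQ ∘ₗ E.subtype) (f := E.subtype) <| by
    rw [LinearMap.ker_comp, Submodule.ker_mkQ, Submodule.disjoint_iff_comap_eq_bot.1 hD.prop]
    exact bot_le
  have hh_apply (e : E) : h (D.mkQ e) = e := LinearMap.congr_fun hh e
  have hess : IsEssentialExtension E (LinearMap.range h) := by
    have hmap : (E.map D.mkQ).map h = E := by
      conv_rhs => rw [← E.range_subtype, ← hh, LinearMap.range_comp, LinearMap.range_comp,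
        E.range_subtype]
    rw [LinearMap.range_eq_map, ← hmap]
    refine (isEssentialExtension_map_mkQ_of_maximal_disjoint hD).map ?_
    rw [Submodule.disjoint_def]
    rintro _ ⟨e, he, rfl⟩ h0
    rw [show e = 0 from (hh_apply ⟨e, he⟩).symm.trans h0, map_zero]
  have hle : LinearMap.range h ≤ E := hE.le_of_ge (hE.prop.trans hess) hess.1
  refine injective_of_retract (i := E.subtype)
    (ρ := (h ∘ₗ D.mkQ).codRestrict E fun x ↦ hle (LinearMap.mem_range_self _ _)) ?_
  ext e
  exact hh_apply e

end EssentialExtensions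

section MatrixAction

variable {R M N : Type u} {l m n : Type*} [CommRing R] [AddCommGroup M] [Module R M]
  [AddCommGroup N] [Module R N] [Fintype n]

variable (M) in
/-- Left multiplication by a matrix with entries in `R` on column vectors with entries in `M`. For
`M = R` this is `Matrix.mulVecLin`. -/
def matrixAction (A : Matrix m n R) : (n → M) →ₗ[R] (m → M) :=
  LinearMap.pi fun i ↦ ∑ j, A i j • LinearMap.proj j

theorem matrixAction_apply (A : Matrix m n R) (x : n → M) (i : m) :
    matrixAction M A x i = ∑ j, A i j • x j := by
  simp [matrixAction]

theorem exists_exact_matrixAction [IsNoetherianRing R] (B : Matrix m n R) :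
    ∃ (k : ℕ) (A : Matrix n (Fin k) R), Function.Exact (matrixAction R A) (matrixAction R B) := by
  obtain ⟨k, κ, hκ⟩ := Submodule.fg_iff_exists_fin_generating_family.1
    (IsNoetherian.noetherian (LinearMap.ker (matrixAction R B)))
  refine ⟨k, (Matrix.of κ).transpose,
    LinearMap.exact_iff.2 <| hκ.symm.trans <| SetLike.ext fun x ↦ ?_⟩
  simp only [Submodule.mem_span_range_iff_exists_fun, LinearMap.mem_range, funext_iff,
    matrixAction_apply, Matrix.transpose_apply, Matrix.of_apply, Finset.sum_apply, Pi.smul_apply,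
    smul_eq_mul, mul_comm]

theorem lsum_matrixAction [Fintype m] [DecidableEq m] [DecidableEq n]
    (A : Matrix m n R) (f : n → N →ₗ[R] M) :
    LinearMap.lsum R (fun _ ↦ N) R (matrixAction (N →ₗ[R] M) A f) =
      LinearMap.lsum R (fun _ ↦ N) R f ∘ₗ matrixAction N A.transpose := by
  ext x
  simp only [LinearMap.lsum_apply, LinearMap.comp_apply, LinearMap.sum_apply, LinearMap.proj_apply,
    matrixAction_apply, LinearMap.smul_apply, map_sum, map_smul, Matrix.transpose_apply]
  exact Finset.sum_comm

theorem exact_matrixAction_hom [Fintype l] [Fintype m] [Module.Injective R M]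
    {A : Matrix m n R} {B : Matrix l m R}
    (h : Function.Exact (matrixAction N A) (matrixAction N B)) :
    Function.Exact (matrixAction (N →ₗ[R] M) B.transpose)
      (matrixAction (N →ₗ[R] M) A.transpose) := by
  classical
  intro f
  constructor
  · intro hf
    obtain ⟨g, hg⟩ := exists_linearMap_extending (β := matrixAction N B)
        (f := LinearMap.lsum R (fun _ ↦ N) R f) <| by
      rw [h.linearMap_ker_eq, LinearMap.range_le_ker_iff]
      simpa [hf] using (lsum_matrixAction A.transpose f).symm
    obtain ⟨g, rfl⟩ := (LinearMap.lsum R (fun _ ↦ N) R).surjective g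
    exact ⟨g, (LinearMap.lsum R (fun _ ↦ N) R).injective (by rw [lsum_matrixAction]; exact hg)⟩
  · rintro ⟨g, rfl⟩
    apply (LinearMap.lsum R (fun _ ↦ N) R).injective
    rw [lsum_matrixAction, lsum_matrixAction, LinearMap.comp_assoc, Matrix.transpose_transpose,
      Matrix.transpose_transpose, h.linearMap_comp_eq_zero, LinearMap.comp_zero, map_zero]

theorem exact_matrixAction_congr [Fintype m] (e : M ≃ₗ[R] N) {A : Matrix m n R} {B : Matrix l m R}
    (h : Function.Exact (matrixAction M A) (matrixAction M B)) :
    Function.Exact (matrixAction N A) (matrixAction N B) := by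
  refine (Function.Exact.iff_of_ladder_linearEquiv (e₁ := .piCongrRight fun _ ↦ e)
    (e₂ := .piCongrRight fun _ ↦ e) (e₃ := .piCongrRight fun _ ↦ e) ?_ ?_).2 h <;>
  · ext x i
    simp [matrixAction_apply]

theorem exact_matrixAction_of_injective [Fintype l] [Fintype m] [Module.Injective R M]
    {A : Matrix m n R} {B : Matrix l m R}
    (h : Function.Exact (matrixAction R A) (matrixAction R B)) :
    Function.Exact (matrixAction M B.transpose) (matrixAction M A.transpose) :=
  exact_matrixAction_congr (LinearMap.ringLmapEquivSelf R R M) (exact_matrixAction_hom h)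

theorem sum_mul_eq_zero_of_exact_matrixAction [Fintype m] {A : Matrix m n R} {a : m → R}
    (h : Function.Exact (matrixAction R A) (matrixAction R (Matrix.replicateRow Unit a))) (j : n) :
    ∑ i, a i * A i j = 0 := by
  classical
  simpa [matrixAction_apply, Pi.single_apply] using
    congrFun (h.apply_apply_eq_zero (Pi.single j 1)) ()

theorem injective_of_exact_matrixAction [IsNoetherianRing R]
    (h : ∀ {k l : ℕ} {A : Matrix (Fin l) (Fin k) R} {B : Matrix Unit (Fin l) R},
      Function.Exact (matrixAction R A) (matrixAction R B) →
      Function.Exact (matrixAction M B.transpose) (matrixAction M A.transpose)) :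
    Module.Injective R M := by
  refine Module.Baer.injective fun I g ↦ ?_
  obtain ⟨l, a, ha⟩ := Submodule.fg_iff_exists_fin_generating_family.1
    ((Submodule.fg_top I).2 (IsNoetherian.noetherian I))
  obtain ⟨k, A, hA⟩ := exists_exact_matrixAction (Matrix.replicateRow Unit fun i ↦ (a i : R))
  have hga : matrixAction M A.transpose (g ∘ a) = 0 := by
    ext j
    have hj : ∑ i, A i j • a i = 0 := by
      ext
      simpa [mul_comm] using sum_mul_eq_zero_of_exact_matrixAction hA j
    simpa [matrixAction_apply] using congrArg g hj
  obtain ⟨w, hw⟩ := (h hA _).1 hga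
  have hg : LinearMap.toSpanSingleton R M (w ()) ∘ₗ I.subtype = g :=
    LinearMap.ext_on_range ha fun i ↦ by simpa [matrixAction_apply] using congrFun hw i
  exact ⟨LinearMap.toSpanSingleton R M (w ()), fun x hx ↦ LinearMap.congr_fun hg ⟨x, hx⟩⟩

theorem flat_of_exact_matrixAction [IsNoetherianRing R]
    (h : ∀ {k l : ℕ} {A : Matrix (Fin l) (Fin k) R} {B : Matrix Unit (Fin l) R},
      Function.Exact (matrixAction R A) (matrixAction R B) →
      Function.Exact (matrixAction M A) (matrixAction M B)) :
    Module.Flat R M := by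
  refine .of_forall_isTrivialRelation fun {l a x} hax ↦ ?_
  obtain ⟨k, A, hA⟩ := exists_exact_matrixAction (Matrix.replicateRow Unit a)
  obtain ⟨y, hy⟩ := (h hA x).1 (funext fun _ ↦ (matrixAction_apply _ _ _).trans hax)
  refine ⟨k, A, y, fun i ↦ by rw [← hy, matrixAction_apply],
    sum_mul_eq_zero_of_exact_matrixAction hA⟩

theorem piRight_lTensor_matrixAction [Fintype m] [DecidableEq m] [DecidableEq n]
    (A : Matrix m n R) :
    (TensorProduct.piRight R R M fun _ : m ↦ N).toLinearMap ∘ₗ (matrixAction N A).lTensor M =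
      matrixAction (TensorProduct R M N) A ∘ₗ
        (TensorProduct.piRight R R M fun _ : n ↦ N).toLinearMap := by
  refine TensorProduct.ext' fun x y ↦ funext fun i ↦ ?_
  simp [matrixAction_apply, TensorProduct.tmul_sum]

theorem exact_matrixAction_tensorProduct [Module.Flat R M] [Finite l] [Fintype m]
    {A : Matrix m n R} {B : Matrix l m R}
    (h : Function.Exact (matrixAction N A) (matrixAction N B)) :
    Function.Exact (matrixAction (TensorProduct R M N) A)
      (matrixAction (TensorProduct R M N) B) := by
  classical
  cases nonempty_fintype l
  exact (Function.Exact.iff_of_ladder_linearEquiv (piRight_lTensor_matrixAction A).symm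
    (piRight_lTensor_matrixAction B).symm).2 (Module.Flat.lTensor_exact M h)

theorem exact_matrixAction_of_flat [Module.Flat R M] [Finite l] [Fintype m]
    {A : Matrix m n R} {B : Matrix l m R}
    (h : Function.Exact (matrixAction R A) (matrixAction R B)) :
    Function.Exact (matrixAction M A) (matrixAction M B) :=
  exact_matrixAction_congr (TensorProduct.rid R M) (exact_matrixAction_tensorProduct h)

theorem flat_pi [IsNoetherianRing R] {ι : Type u} {C : ι → Type u} [∀ i, AddCommGroup (C i)]
    [∀ i, Module R (C i)] [∀ i, Module.Flat R (C i)] : Module.Flat R (∀ i, C i) := by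
  refine flat_of_exact_matrixAction fun {k l A B} hAB x ↦ ⟨fun hx ↦ ?_, ?_⟩
  · choose y hy using fun s ↦ (exact_matrixAction_of_flat (M := C s) hAB fun i ↦ x i s).1 <| by
      ext j
      simpa [matrixAction_apply] using congrFun (congrFun hx j) s
    refine ⟨fun j s ↦ y s j, funext fun i ↦ funext fun s ↦ ?_⟩
    simpa [matrixAction_apply] using congrFun (hy s) i
  · rintro ⟨y, rfl⟩
    ext j s
    simpa [matrixAction_apply] using congrFun
      ((exact_matrixAction_of_flat (M := C s) hAB).apply_apply_eq_zero fun i ↦ y i s) j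

theorem flat_linearMap_of_injective [IsNoetherianRing R] [Module.Injective R M]
    [Module.Injective R N] : Module.Flat R (M →ₗ[R] N) :=
  flat_of_exact_matrixAction fun {k l A B} h ↦ by
    simpa using exact_matrixAction_hom (M := N) (exact_matrixAction_of_injective (M := M) h)

theorem injective_tensorProduct [IsNoetherianRing R] [Module.Flat R M] [Module.Injective R N] :
    Module.Injective R (TensorProduct R M N) :=
  injective_of_exact_matrixAction fun h ↦
    exact_matrixAction_tensorProduct (exact_matrixAction_of_injective h)

end MatrixAction

section InjectiveHulls

open scoped Pointwise TensorProduct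

variable {R : Type u} [CommRing R]

/-- The module `E` is an injective hull of `R ⧸ p`, where `R ⧸ p` is embedded in `E` by sending the
class of `1` to `x`. -/
structure IsInjectiveHullOfQuotient (p : Ideal R) {E : Type u} [AddCommGroup E] [Module R E]
    (x : E) : Prop where
  injective : Module.Injective R E
  ker_toSpanSingleton : LinearMap.ker (LinearMap.toSpanSingleton R E x) = p
  isEssentialExtension : IsEssentialExtension (R ∙ x) ⊤

theorem exists_injective_linearMap_to_injective (M : Type u) [AddCommGroup M] [Module R M] :
    ∃ (J : Type u) (_ : AddCommGroup J) (_ : Module R J) (f : M →ₗ[R] J),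
      Module.Injective R J ∧ Function.Injective f :=
  let J : ModuleCat.{u} R := Injective.under (ModuleCat.of R M)
  have : Injective (ModuleCat.of R J) := Injective.injective_under (ModuleCat.of R M)
  ⟨J, inferInstance, inferInstance, (Injective.ι (ModuleCat.of R M)).hom,
    Module.injective_module_of_injective_object R J,
    (ModuleCat.mono_iff_injective _).1 inferInstance⟩

theorem exists_isInjectiveHullOfQuotient (p : Ideal R) :
    ∃ (E : Type u) (_ : AddCommGroup E) (_ : Module R E) (x : E),
      IsInjectiveHullOfQuotient p x := by
  obtain ⟨J, _, _, f, hJ, hf⟩ := exists_injective_linearMap_to_injective (R := R) (R ⧸ p)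
  obtain ⟨E, hE⟩ := exists_maximal_isEssentialExtension (R ∙ f (p.mkQ 1))
  refine ⟨E, inferInstance, inferInstance,
    ⟨_, hE.prop.1 (Submodule.mem_span_singleton_self _)⟩,
    injective_of_maximal_isEssentialExtension hE, ?_, le_top, fun y _ hy ↦ ?_⟩
  · ext r
    have hr : r • f (p.mkQ 1) = f (p.mkQ r) := by
      rw [← map_smul, ← map_smul, smul_eq_mul, mul_one]
    rw [LinearMap.mem_ker, LinearMap.toSpanSingleton_apply, ← Submodule.coe_eq_zero,
      Submodule.coe_smul, hr, map_eq_zero_iff f hf]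
    exact Submodule.Quotient.mk_eq_zero p
  · obtain ⟨r, hr, hr0⟩ := hE.prop.2 y y.2 (by simpa using hy)
    obtain ⟨t, ht⟩ := Submodule.mem_span_singleton.1 hr
    exact ⟨r, Submodule.mem_span_singleton.2 ⟨t, Subtype.ext ht⟩,
      fun h0 ↦ hr0 (congrArg Subtype.val h0)⟩

namespace IsInjectiveHullOfQuotient

variable {p : Ideal R} {E : Type u} [AddCommGroup E] [Module R E] {x : E}

theorem smul_eq_zero_iff (hx : IsInjectiveHullOfQuotient p x) {r : R} : r • x = 0 ↔ r ∈ p := by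
  rw [← hx.ker_toSpanSingleton, LinearMap.mem_ker, LinearMap.toSpanSingleton_apply]

theorem exists_smul_eq_smul (hx : IsInjectiveHullOfQuotient p x) {y : E} (hy : y ≠ 0) :
    ∃ r : R, ∃ t ∉ p, r • y = t • x := by
  obtain ⟨r, hr, hr0⟩ := hx.isEssentialExtension.2 y trivial hy
  obtain ⟨t, ht⟩ := Submodule.mem_span_singleton.1 hr
  exact ⟨r, t, fun htp ↦ hr0 (by rw [← ht, hx.smul_eq_zero_iff.2 htp]), ht.symm⟩

theorem isSMulRegular [p.IsPrime] (hx : IsInjectiveHullOfQuotient p x) {r : R} (hr : r ∉ p) :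
    IsSMulRegular E r := by
  refine (isSMulRegular_iff_right_eq_zero_of_smul).2 fun y hy ↦ ?_
  by_contra hy0
  obtain ⟨s, t, ht, hst⟩ := hx.exists_smul_eq_smul hy0
  have hrt : r * t ∈ p := by
    rw [← hx.smul_eq_zero_iff, mul_smul, ← hst, smul_comm, hy, smul_zero]
  exact (Ideal.IsPrime.mem_or_mem ‹_› hrt).elim hr ht

theorem torsionBySet_eq_bot [p.IsPrime] (hx : IsInjectiveHullOfQuotient p x) {I : Ideal R}
    (hI : ¬ I ≤ p) : Submodule.torsionBySet R E I = ⊥ := by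
  obtain ⟨r, hrI, hrp⟩ := SetLike.not_le_iff_exists.1 hI
  refine (Submodule.eq_bot_iff _).2 fun y hy ↦ (hx.isSMulRegular hrp).right_eq_zero_of_smul ?_
  exact (Submodule.mem_torsionBySet_iff _ _).1 hy ⟨r, hrI⟩

theorem exists_smul_eq_smul_of_mem_torsionBySet [p.IsPrime] (hx : IsInjectiveHullOfQuotient p x)
    {y : E} (hy : y ∈ Submodule.torsionBySet R E p) : ∃ r ∉ p, ∃ t : R, r • y = t • x := by
  by_cases hy0 : y = 0
  · exact ⟨1, Ideal.IsPrime.one_notMem ‹_›, 0, by rw [hy0, smul_zero, zero_smul]⟩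
  obtain ⟨r, t, ht, hrt⟩ := hx.exists_smul_eq_smul hy0
  refine ⟨r, fun hr ↦ ht (hx.smul_eq_zero_iff.1 ?_), t, hrt⟩
  rw [← hrt]
  exact (Submodule.mem_torsionBySet_iff _ _).1 hy ⟨r, hr⟩

end IsInjectiveHullOfQuotient

theorem ker_pi_smul_id {m : Type*} (a : m → R) (M : Type*) [AddCommGroup M] [Module R M] :
    LinearMap.ker (LinearMap.pi fun i ↦ a i • (LinearMap.id : M →ₗ[R] M)) =
      Submodule.torsionBySet R M (Submodule.span R (Set.range a)) := by
  ext y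
  rw [← Submodule.torsionBySet_eq_torsionBySet_span, Submodule.mem_torsionBySet_iff]
  simp [funext_iff]

theorem torsionBySet_tensorProduct_le {G M : Type*} [AddCommGroup G] [Module R G] [Module.Flat R G]
    [AddCommGroup M] [Module R M] {I : Ideal R} (hI : I.FG) :
    Submodule.torsionBySet R (G ⊗[R] M) I ≤
      LinearMap.range ((Submodule.torsionBySet R M I).subtype.lTensor G) := by
  obtain ⟨n, a, rfl⟩ := Submodule.fg_iff_exists_fin_generating_family.1 hI
  rw [← ker_pi_smul_id a M, ← ker_pi_smul_id a (G ⊗[R] M),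
    ← (Module.Flat.lTensor_exact (R := R) G (LinearMap.exact_subtype_ker_map _)).linearMap_ker_eq]
  have hpi : (TensorProduct.piRight R R G fun _ : Fin n ↦ M).toLinearMap ∘ₗ
      (LinearMap.pi fun i ↦ a i • (LinearMap.id : M →ₗ[R] M)).lTensor G =
      LinearMap.pi fun i ↦ a i • LinearMap.id := by
    ext g y i
    simp
  rw [← hpi, LinearEquiv.ker_comp]

theorem mem_smul_top_of_torsionBySet_le_ker {ι : Type*} {M J : ι → Type u}
    [∀ i, AddCommGroup (M i)] [∀ i, Module R (M i)] [∀ i, AddCommGroup (J i)]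
    [∀ i, Module R (J i)] [∀ i, Module.Injective R (J i)] {I : Ideal R} (hI : I.FG)
    {c : ∀ i, M i →ₗ[R] J i} (hc : ∀ i, Submodule.torsionBySet R (M i) I ≤ LinearMap.ker (c i)) :
    c ∈ I • (⊤ : Submodule R (∀ i, M i →ₗ[R] J i)) := by
  obtain ⟨n, a, rfl⟩ := Submodule.fg_iff_exists_fin_generating_family.1 hI
  have hker (i) : LinearMap.ker (LinearMap.pi fun k ↦ a k • (LinearMap.id : M i →ₗ[R] M i)) ≤
      LinearMap.ker (c i) := by
    rw [ker_pi_smul_id]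
    exact hc i
  choose b hb using fun i ↦ exists_linearMap_extending (hker i)
  have hsum : c = ∑ k, a k • fun i ↦ b i ∘ₗ LinearMap.single R (fun _ ↦ M i) k := by
    ext i y
    have hy : (LinearMap.pi fun k ↦ a k • (LinearMap.id : M i →ₗ[R] M i)) y =
        ∑ k, a k • Pi.single k y := by
      rw [← Finset.univ_sum_single (LinearMap.pi _ y)]
      simp [← Pi.single_smul]
    rw [← hb i, LinearMap.comp_apply, hy]
    simp
  rw [hsum]
  exact Submodule.sum_mem _ fun k _ ↦
    Submodule.smul_mem_smul (Submodule.subset_span (Set.mem_range_self k)) trivial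

theorem smul_top_eq_top_of_forall_isPrime [IsNoetherianRing R] {M : Type*} [AddCommGroup M]
    [Module R M] {I : Ideal R}
    (h : ∀ p : Ideal R, p.IsPrime → I ≤ p → p • (⊤ : Submodule R M) = ⊤) :
    I • (⊤ : Submodule R M) = ⊤ := by
  obtain ⟨n, hn⟩ := Ideal.exists_radical_pow_le_of_fg I I.radical.fg_of_isNoetherianRing
  have hfin := Ideal.finite_minimalPrimes_of_isNoetherianRing R I
  have hprod : ∏ p ∈ hfin.toFinset, p ≤ I.radical := by
    rw [← Ideal.sInf_minimalPrimes]
    exact Ideal.prod_le_inf.trans (le_sInf fun p hp ↦ Finset.inf_le (hfin.mem_toFinset.2 hp))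
  have hmem : (∏ p ∈ hfin.toFinset, p) ^ n ∈
      MulAction.stabilizerSubmonoid (Ideal R) (⊤ : Submodule R M) :=
    pow_mem (prod_mem fun p hp ↦
      have hp := hfin.mem_toFinset.1 hp
      h p hp.isPrime hp.1.2) n
  exact top_le_iff.1 <| (MulAction.mem_stabilizerSubmonoid_iff.1 hmem).ge.trans <|
    Submodule.smul_mono_left ((Ideal.pow_right_mono hprod n).trans hn)

theorem subsingleton_of_forall_isPrime_smul_top_eq_top [IsNoetherianRing R] {M : Type*}
    [AddCommGroup M] [Module R M]
    (h : ∀ p : Ideal R, p.IsPrime → p • (⊤ : Submodule R M) = ⊤) : Subsingleton M := by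
  rw [← Submodule.subsingleton_iff R, ← subsingleton_iff_bot_eq_top]
  exact (Submodule.bot_smul _).symm.trans (smul_top_eq_top_of_forall_isPrime fun p hp _ ↦ h p hp)

namespace IsInjectiveHullOfQuotient

variable {p : Ideal R} {E G : Type u} [AddCommGroup E] [Module R E] {x : E} [AddCommGroup G]
  [Module R G]

theorem exists_smul_lTensor_subtype_eq_tmul [p.IsPrime]
    (hx : IsInjectiveHullOfQuotient p x) (u : G ⊗[R] Submodule.torsionBySet R E p) :
    ∃ r ∉ p, ∃ g : G, r • (Submodule.torsionBySet R E p).subtype.lTensor G u = g ⊗ₜ x := by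
  induction u with
  | zero => exact ⟨1, Ideal.IsPrime.one_notMem ‹_›, 0, by simp⟩
  | add u v hu hv =>
    obtain ⟨r, hr, g, hg⟩ := hu
    obtain ⟨s, hs, h, hh⟩ := hv
    refine ⟨r * s, fun hrs ↦ (Ideal.IsPrime.mem_or_mem ‹_› hrs).elim hr hs, s • g + r • h, ?_⟩
    rw [map_add, smul_add, mul_smul, mul_smul, hh, smul_comm, hg, TensorProduct.add_tmul,
      TensorProduct.smul_tmul', TensorProduct.smul_tmul']
  | tmul g y =>
    obtain ⟨r, hr, t, hrt⟩ := hx.exists_smul_eq_smul_of_mem_torsionBySet y.2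
    refine ⟨r, hr, t • g, ?_⟩
    rw [LinearMap.lTensor_tmul, Submodule.subtype_apply, ← TensorProduct.tmul_smul, hrt,
      TensorProduct.smul_tmul]

variable [Module.Flat R G]

theorem tmul_eq_zero_iff (hx : IsInjectiveHullOfQuotient p x) {g : G} :
    g ⊗ₜ[R] x = 0 ↔ g ∈ p • (⊤ : Submodule R G) := by
  let j : R ⧸ p →ₗ[R] E := p.liftQ (LinearMap.toSpanSingleton R E x) hx.ker_toSpanSingleton.ge
  have hj : Function.Injective j := LinearMap.ker_eq_bot.1 <|
    Submodule.ker_liftQ_eq_bot _ _ _ hx.ker_toSpanSingleton.le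
  have hjg : j.lTensor G (g ⊗ₜ Ideal.Quotient.mk p 1) = g ⊗ₜ x := by
    rw [LinearMap.lTensor_tmul]
    exact congrArg _ (one_smul R x)
  rw [← hjg, map_eq_zero_iff _ (Module.Flat.lTensor_preserves_injective_linearMap j hj),
    ← (TensorProduct.tensorQuotEquivQuotSMul G p).map_eq_zero_iff,
    TensorProduct.tensorQuotEquivQuotSMul_tmul_mk, one_smul, Submodule.Quotient.mk_eq_zero]

theorem mem_smul_top_of_mk_mem_smul_top (hx : IsInjectiveHullOfQuotient p x) {g : G}
    (hg : TensorProduct.mk R G E g ∈ p • (⊤ : Submodule R (E →ₗ[R] G ⊗[R] E))) :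
    g ∈ p • (⊤ : Submodule R G) := by
  have hle : p • ⊤ ≤ LinearMap.ker (LinearMap.applyₗ (R := R) (M₂ := G ⊗[R] E) x) :=
    Submodule.smul_le.2 fun r hr c _ ↦ by
      rw [LinearMap.mem_ker, LinearMap.applyₗ_apply_apply, LinearMap.smul_apply, ← map_smul,
        hx.smul_eq_zero_iff.2 hr, map_zero]
  exact hx.tmul_eq_zero_iff.1 (hle hg)

variable [p.IsPrime]

theorem exists_eq_tmul_of_mem_torsionBySet (hx : IsInjectiveHullOfQuotient p x) (hp : p.FG)
    (hG : ∀ r ∉ p, (p ⊔ Ideal.span {r}) • (⊤ : Submodule R G) = ⊤) {z : G ⊗[R] E}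
    (hz : z ∈ Submodule.torsionBySet R (G ⊗[R] E) p) : ∃ g : G, z = g ⊗ₜ x := by
  obtain ⟨u, rfl⟩ := torsionBySet_tensorProduct_le hp hz
  obtain ⟨r, hr, h, hh⟩ := hx.exists_smul_lTensor_subtype_eq_tmul u
  have hmem : h ∈ p • ⊤ ⊔ r • (⊤ : Submodule R G) := by
    rw [← Submodule.ideal_span_singleton_smul, ← Submodule.sup_smul, hG r hr]
    trivial
  obtain ⟨k, hk, _, hg, rfl⟩ := Submodule.mem_sup.1 hmem
  obtain ⟨g, -, rfl⟩ := (Submodule.mem_smul_pointwise_iff_exists _ _ _).1 hg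
  refine ⟨g, (hx.isSMulRegular hr).lTensor G ?_⟩
  change r • _ = r • _
  rw [hh, TensorProduct.add_tmul, hx.tmul_eq_zero_iff.2 hk, zero_add, TensorProduct.smul_tmul']

theorem exists_forall_mem_torsionBySet_apply_eq_tmul (hx : IsInjectiveHullOfQuotient p x)
    (hp : p.FG) (hG : ∀ r ∉ p, (p ⊔ Ideal.span {r}) • (⊤ : Submodule R G) = ⊤)
    (c : E →ₗ[R] G ⊗[R] E) :
    ∃ g : G, ∀ y ∈ Submodule.torsionBySet R E p, c y = g ⊗ₜ y := by
  have hcx : c x ∈ Submodule.torsionBySet R (G ⊗[R] E) p :=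
    (Submodule.mem_torsionBySet_iff _ _).2 fun r ↦ by
      rw [← map_smul, hx.smul_eq_zero_iff.2 r.2, map_zero]
  obtain ⟨g, hg⟩ := hx.exists_eq_tmul_of_mem_torsionBySet hp hG hcx
  refine ⟨g, fun y hy ↦ ?_⟩
  obtain ⟨r, hr, t, hrt⟩ := hx.exists_smul_eq_smul_of_mem_torsionBySet hy
  refine (hx.isSMulRegular hr).lTensor G ?_
  change r • c y = r • g ⊗ₜ y
  rw [← map_smul, ← TensorProduct.tmul_smul, hrt, map_smul, hg, TensorProduct.tmul_smul]

end IsInjectiveHullOfQuotient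

end InjectiveHulls

section Purity

open scoped TensorProduct

variable {R : Type u} [CommRing R] {G C : Type*} [AddCommGroup G] [Module R G] [AddCommGroup C]
  [Module R C] {θ : G →ₗ[R] C}

theorem rTensor_lTensor_apply {N P : Type*} [AddCommGroup N] [Module R N] [AddCommGroup P]
    [Module R P] (θ : G →ₗ[R] C) (f : N →ₗ[R] P) (z : N ⊗[R] G) :
    f.rTensor C (θ.lTensor N z) = θ.lTensor P (f.rTensor G z) := by
  rw [← LinearMap.comp_apply, ← LinearMap.comp_apply, LinearMap.rTensor_comp_lTensor,
    LinearMap.lTensor_comp_rTensor]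

theorem injective_lTensor_quotient {I : Ideal R}
    (hθ : ∀ g, θ g ∈ I • (⊤ : Submodule R C) → g ∈ I • (⊤ : Submodule R G)) :
    Function.Injective (θ.lTensor (R ⧸ I)) := by
  refine (injective_iff_map_eq_zero _).2 fun z hz ↦ ?_
  obtain ⟨g, rfl⟩ := (TensorProduct.quotTensorEquivQuotSMul G I).symm.surjective.comp
    (Submodule.mkQ_surjective _) z
  have hg : θ g ∈ I • (⊤ : Submodule R C) := by
    rw [← Submodule.Quotient.mk_eq_zero,
      ← (TensorProduct.quotTensorEquivQuotSMul C I).symm.map_eq_zero_iff, ← hz]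
    simp
  rw [Function.comp_apply, Submodule.mkQ_apply, (Submodule.Quotient.mk_eq_zero _).2 (hθ g hg),
    map_zero]

variable {N₁ N₂ N₃ : Type*} [AddCommGroup N₁] [Module R N₁] [AddCommGroup N₂] [Module R N₂]
  [AddCommGroup N₃] [Module R N₃] {f : N₁ →ₗ[R] N₂} {g : N₂ →ₗ[R] N₃} [Module.Flat R C]

theorem injective_lTensor_of_exact (hf : Function.Injective f) (hg : Function.Surjective g)
    (hfg : Function.Exact f g) (h₁ : Function.Injective (θ.lTensor N₁))
    (h₃ : Function.Injective (θ.lTensor N₃)) : Function.Injective (θ.lTensor N₂) := by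
  refine (injective_iff_map_eq_zero _).2 fun z hz ↦ ?_
  have hgz : g.rTensor G z = 0 := by
    rw [← map_eq_zero_iff _ h₃, ← rTensor_lTensor_apply, hz, map_zero]
  obtain ⟨w, rfl⟩ := (rTensor_exact G hfg hg z).1 hgz
  have hw : f.rTensor C (θ.lTensor N₁ w) = 0 := by rw [rTensor_lTensor_apply, hz]
  rw [map_eq_zero_iff _ (Module.Flat.rTensor_preserves_injective_linearMap f hf),
    map_eq_zero_iff _ h₁] at hw
  rw [hw, map_zero]

theorem injective_rTensor_of_exact {Q : Type*} [AddCommGroup Q] [Module R Q] {π : C →ₗ[R] Q}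
    (hf : Function.Injective f) (hg : Function.Surjective g) (hfg : Function.Exact f g)
    (hπ : Function.Surjective π) (hθπ : Function.Exact θ π)
    (h₃ : Function.Injective (θ.lTensor N₃)) : Function.Injective (f.rTensor Q) := by
  refine (injective_iff_map_eq_zero _).2 fun q hq ↦ ?_
  obtain ⟨c, rfl⟩ := LinearMap.lTensor_surjective N₁ hπ q
  rw [rTensor_lTensor_apply] at hq
  obtain ⟨z, hz⟩ := (lTensor_exact N₂ hθπ hπ _).1 hq
  have hgz : g.rTensor G z = 0 := by
    rw [← map_eq_zero_iff _ h₃, ← rTensor_lTensor_apply, hz]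
    exact (rTensor_exact C hfg hg).apply_apply_eq_zero c
  obtain ⟨w, rfl⟩ := (rTensor_exact G hfg hg z).1 hgz
  rw [← rTensor_lTensor_apply] at hz
  rw [← Module.Flat.rTensor_preserves_injective_linearMap f hf hz]
  exact (lTensor_exact N₁ hθπ hπ).apply_apply_eq_zero w

variable [IsNoetherianRing R]

theorem injective_lTensor_of_forall_isPrime
    (hθ : ∀ p : Ideal R, p.IsPrime →
      ∀ g, θ g ∈ p • (⊤ : Submodule R C) → g ∈ p • (⊤ : Submodule R G))
    (N : Type*) [AddCommGroup N] [Module R N] [hN : Module.Finite R N] :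
    Function.Injective (θ.lTensor N) := by
  induction hN using IsNoetherianRing.induction_on_isQuotientEquivQuotientPrime R with
  | subsingleton N => exact Function.injective_of_subsingleton _
  | quotient N p e =>
    refine Function.Injective.of_comp (f := e.toLinearMap.rTensor C) ?_
    have hcomp : ⇑(e.toLinearMap.rTensor C) ∘ θ.lTensor N =
        θ.lTensor (R ⧸ p.asIdeal) ∘ e.rTensor G := funext fun z ↦ rTensor_lTensor_apply θ _ z
    rw [hcomp]
    exact (injective_lTensor_quotient (hθ _ p.isPrime)).comp (e.rTensor G).injective
  | exact N₁ N₂ N₃ f g hf hg hfg h₁ h₃ => exact injective_lTensor_of_exact hf hg hfg h₁ h₃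

theorem injective_of_forall_isPrime
    (hθ : ∀ p : Ideal R, p.IsPrime →
      ∀ g, θ g ∈ p • (⊤ : Submodule R C) → g ∈ p • (⊤ : Submodule R G)) :
    Function.Injective θ := by
  refine Function.Injective.of_comp (f := (TensorProduct.lid R C).symm) ?_
  have hcomp : ⇑(TensorProduct.lid R C).symm ∘ θ = θ.lTensor R ∘ (TensorProduct.lid R G).symm := by
    ext g
    simp
  rw [hcomp]
  exact (injective_lTensor_of_forall_isPrime hθ R).comp (TensorProduct.lid R G).symm.injective

theorem flat_quotient_range_of_forall_isPrime
    (hθ : ∀ p : Ideal R, p.IsPrime →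
      ∀ g, θ g ∈ p • (⊤ : Submodule R C) → g ∈ p • (⊤ : Submodule R G)) :
    Module.Flat R (C ⧸ LinearMap.range θ) :=
  Module.Flat.iff_rTensor_injective'.2 fun I ↦
    injective_rTensor_of_exact I.subtype_injective I.mkQ_surjective (LinearMap.exact_subtype_mkQ I)
      (LinearMap.range θ).mkQ_surjective (LinearMap.exact_map_mkQ_range θ)
      (injective_lTensor_of_forall_isPrime hθ (R ⧸ I))

end Purity

section FlatCotorsionEmbedding

open scoped TensorProduct

variable {R : Type u} [CommRing R]

/-- The canonical map from `G` to the product of the modules `Hom(E i, G ⊗ E i)`, the units of the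
tensor-hom adjunctions. When `E` is the family of the injective hulls of `R ⧸ p`, with `p` running
through a set of primes, the target is a flat cotorsion module for `G` flat and `R` noetherian. -/
def toPiHomTensor {ι : Type*} (G : Type u) [AddCommGroup G] [Module R G] (E : ι → Type u)
    [∀ i, AddCommGroup (E i)] [∀ i, Module R (E i)] : G →ₗ[R] ∀ i, E i →ₗ[R] G ⊗[R] E i :=
  LinearMap.pi fun i ↦ TensorProduct.mk R G (E i)

variable {S : Set (PrimeSpectrum R)} {G : Type u} [AddCommGroup G] [Module R G] [Module.Flat R G]
  {E : S → Type u} [∀ p, AddCommGroup (E p)] [∀ p, Module R (E p)] {x : ∀ p, E p}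

theorem mem_smul_top_of_toPiHomTensor_mem_smul_top
    (hx : ∀ p : S, IsInjectiveHullOfQuotient p.1.asIdeal (x p))
    (hG : ∀ p ∉ S, p.asIdeal • (⊤ : Submodule R G) = ⊤) (q : PrimeSpectrum R) {g : G}
    (hg : toPiHomTensor G E g ∈ q.asIdeal • (⊤ : Submodule R (∀ p, E p →ₗ[R] G ⊗[R] E p))) :
    g ∈ q.asIdeal • (⊤ : Submodule R G) := by
  by_cases hq : q ∈ S
  · exact (hx ⟨q, hq⟩).mem_smul_top_of_mk_mem_smul_top <| Submodule.smul_top_le_comap_smul_top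
      q.asIdeal (LinearMap.proj (φ := fun p ↦ E p →ₗ[R] G ⊗[R] E p) ⟨q, hq⟩) hg
  · rw [hG q hq]
    trivial

variable [IsNoetherianRing R]

-- Modulo `q`, a family `c` only depends on the restrictions of its members to the `q`-torsion of
-- `E p`, which vanishes for `p ≠ q`; on the `q`-torsion of `E q`, `c` is `y ↦ g ⊗ y` for some `g`.
theorem exists_sub_toPiHomTensor_mem_smul_top
    (hx : ∀ p : S, IsInjectiveHullOfQuotient p.1.asIdeal (x p))
    (hG : ∀ p ∉ S, p.asIdeal • (⊤ : Submodule R G) = ⊤) {q : PrimeSpectrum R}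
    (hq : ∀ p ∈ S, ¬ q < p) (c : ∀ p, E p →ₗ[R] G ⊗[R] E p) :
    ∃ g : G, c - toPiHomTensor G E g ∈
      q.asIdeal • (⊤ : Submodule R (∀ p, E p →ₗ[R] G ⊗[R] E p)) := by
  have hE (p : S) : Module.Injective R (E p) := (hx p).injective
  have hGE (p : S) : Module.Injective R (G ⊗[R] E p) := injective_tensorProduct
  have hfg : q.asIdeal.FG := q.asIdeal.fg_of_isNoetherianRing
  have hdiv (r : R) (hr : r ∉ q.asIdeal) :
      (q.asIdeal ⊔ Ideal.span {r}) • (⊤ : Submodule R G) = ⊤ :=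
    smul_top_eq_top_of_forall_isPrime fun p hp hle ↦ hG ⟨p, hp⟩ fun hpS ↦ hq _ hpS <|
      (PrimeSpectrum.asIdeal_lt_asIdeal _ _).1 <| SetLike.lt_iff_le_and_exists.2
        ⟨le_sup_left.trans hle, r, hle (Ideal.mem_sup_right (Ideal.mem_span_singleton_self r)), hr⟩
  have htorsion (p : S) (hp : p.1 ≠ q) : Submodule.torsionBySet R (E p) q.asIdeal = ⊥ :=
    (hx p).torsionBySet_eq_bot fun hle ↦ hq p p.2 (lt_of_le_of_ne hle hp.symm)
  suffices hg : ∃ g : G, ∀ p : S, ∀ y ∈ Submodule.torsionBySet R (E p) q.asIdeal,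
      c p y = g ⊗ₜ y by
    obtain ⟨g, hg⟩ := hg
    exact ⟨g, mem_smul_top_of_torsionBySet_le_ker hfg fun p y hy ↦ sub_eq_zero.2 (hg p y hy)⟩
  obtain ⟨g, hg⟩ : ∃ g : G, ∀ hqS : q ∈ S,
      ∀ y ∈ Submodule.torsionBySet R (E ⟨q, hqS⟩) q.asIdeal, c ⟨q, hqS⟩ y = g ⊗ₜ y := by
    by_cases hqS : q ∈ S
    · obtain ⟨g, hg⟩ := (hx ⟨q, hqS⟩).exists_forall_mem_torsionBySet_apply_eq_tmul hfg hdiv (c _)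
      exact ⟨g, fun _ ↦ hg⟩
    · exact ⟨0, fun h ↦ absurd h hqS⟩
  refine ⟨g, fun p y hy ↦ ?_⟩
  by_cases hp : p.1 = q
  · subst hp
    exact hg p.2 y hy
  · rw [htorsion p hp, Submodule.mem_bot] at hy
    rw [hy, map_zero, TensorProduct.tmul_zero]

theorem smul_top_quotient_range_toPiHomTensor
    (hx : ∀ p : S, IsInjectiveHullOfQuotient p.1.asIdeal (x p))
    (hG : ∀ p ∉ S, p.asIdeal • (⊤ : Submodule R G) = ⊤) {q : PrimeSpectrum R}
    (hq : ∀ p ∈ S, ¬ q < p) :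
    q.asIdeal • (⊤ : Submodule R ((∀ p, E p →ₗ[R] G ⊗[R] E p) ⧸
      LinearMap.range (toPiHomTensor (R := R) G E))) = ⊤ := by
  refine eq_top_iff.2 fun z _ ↦ ?_
  obtain ⟨c, rfl⟩ := Submodule.mkQ_surjective _ z
  obtain ⟨g, hg⟩ := exists_sub_toPiHomTensor_mem_smul_top hx hG hq c
  have hmk := Submodule.smul_top_le_comap_smul_top q.asIdeal
    (LinearMap.range (toPiHomTensor (R := R) G E)).mkQ hg
  rwa [Submodule.mem_comap, map_sub, (LinearMap.exact_map_mkQ_range _).apply_apply_eq_zero,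
    sub_zero] at hmk

theorem exists_isCotorsion_flat_quotient_range (S : Set (PrimeSpectrum R))
    (hG : ∀ p ∉ S, p.asIdeal • (⊤ : Submodule R G) = ⊤) :
    ∃ (C : Type u) (_ : AddCommGroup C) (_ : Module R C) (θ : G →ₗ[R] C),
      IsCotorsion R C ∧ Function.Injective θ ∧ Module.Flat R (C ⧸ LinearMap.range θ) ∧
      ∀ q : PrimeSpectrum R, (∀ p ∈ S, ¬ q < p) →
        q.asIdeal • (⊤ : Submodule R (C ⧸ LinearMap.range θ)) = ⊤ := by
  choose E _ _ x hx using fun p : S ↦ exists_isInjectiveHullOfQuotient p.1.asIdeal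
  have hE (p : S) : Module.Injective R (E p) := (hx p).injective
  have hGE (p : S) : Module.Injective R (G ⊗[R] E p) := injective_tensorProduct
  have hflat (p : S) : Module.Flat R (E p →ₗ[R] G ⊗[R] E p) := flat_linearMap_of_injective
  have hC : Module.Flat R (∀ p, E p →ₗ[R] G ⊗[R] E p) := flat_pi
  have hpure (q : Ideal R) (hq : q.IsPrime) (g : G) :=
    mem_smul_top_of_toPiHomTensor_mem_smul_top hx hG ⟨q, hq⟩ (g := g)
  exact ⟨_, inferInstance, inferInstance, toPiHomTensor G E,
    .pi fun p ↦ isCotorsion_linearMap_of_injective, injective_of_forall_isPrime hpure,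
    flat_quotient_range_of_forall_isPrime hpure,
    fun q hq ↦ smul_top_quotient_range_toPiHomTensor hx hG hq⟩

end FlatCotorsionEmbedding

theorem cotorsionDimLE_of_forall_lt_height {R : Type u} [CommRing R] [IsNoetherianRing R] {n : ℕ}
    {G : Type u} [AddCommGroup G] [Module R G] [Module.Flat R G]
    (hG : ∀ p : PrimeSpectrum R, n < Order.height p → p.asIdeal • (⊤ : Submodule R G) = ⊤) :
    cotorsionDimLE R G n := by
  induction n generalizing G with
  | zero =>
    obtain ⟨C, _, _, θ, hC, hθ, _, hdiv⟩ := exists_isCotorsion_flat_quotient_range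
      {p : PrimeSpectrum R | Order.height p ≤ (0 : ℕ)} fun p hp ↦ hG p (not_le.1 hp)
    have hQ : Subsingleton (C ⧸ LinearMap.range θ) :=
      subsingleton_of_forall_isPrime_smul_top_eq_top fun q hq ↦ hdiv ⟨q, hq⟩ fun p hp hqp ↦
        (Order.height_eq_zero.1 (nonpos_iff_eq_zero.1 hp)).not_lt hqp
    have hsurj : Function.Surjective θ :=
      LinearMap.range_eq_top.1 (Submodule.Quotient.subsingleton_iff.1 hQ)
    exact cotorsionDimLE_zero_iff.2 (hC.of_linearEquiv (LinearEquiv.ofBijective θ ⟨hθ, hsurj⟩).symm)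
  | succ n ih =>
    obtain ⟨C, _, _, θ, hC, hθ, _, hdiv⟩ := exists_isCotorsion_flat_quotient_range
      {p : PrimeSpectrum R | Order.height p ≤ (n + 1 : ℕ)} fun p hp ↦ hG p (not_le.1 hp)
    refine cotorsionDimLE_succ_of_injective hC hθ (ih fun q hq ↦ hdiv q fun p hp hqp ↦ ?_)
    have hle : Order.height q + 1 ≤ n + 1 := (Order.height_add_one_le hqp).trans hp
    exact hq.not_ge ((ENat.add_le_add_iff_right ENat.one_ne_top).1 hle)

theorem cotorsionDimLE_of_flat {R : Type u} [CommRing R] [IsNoetherianRing R] {n : ℕ}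
    (hdim : ringKrullDim R ≤ n) {G : Type u} [AddCommGroup G] [Module R G] [Module.Flat R G] :
    cotorsionDimLE R G n :=
  cotorsionDimLE_of_forall_lt_height fun p hp ↦ absurd hp <| not_lt.2 <|
    WithBot.coe_le_coe.1 ((Order.height_le_krullDim p).trans hdim)

theorem hasProjectiveDimensionLE_of_flat {R : Type u} [CommRing R] [IsNoetherianRing R] {n : ℕ}
    (hdim : ringKrullDim R ≤ n) {F : Type u} [AddCommGroup F] [Module R F] [Module.Flat R F] :
    HasProjectiveDimensionLE (ModuleCat.of R F) n :=
  hasProjectiveDimensionLE_of_subsingleton_ext fun _ _ _ _ ↦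
    (cotorsionDimLE_of_flat hdim).subsingleton_ext

/-- over a noetherian ring of Krull dimension `n`, every flat module has
projective dimension at most `n` and hence cotorsion dimension at most `n`. -/
theorem flat_projDim_and_cotorsionDim_le_of_noetherian (R : Type u) [CommRing R]
    [IsNoetherianRing R] (n : ℕ) (hdim : ringKrullDim R = n) :
    ∀ (F : Type u) [AddCommGroup F] [Module R F], Module.Flat R F →
      Nonempty (FiniteProjectiveResolution R F n) ∧ cotorsionDimLE R F n := by
  intro F _ _ _
  have hF : HasProjectiveDimensionLE (ModuleCat.of R F) n :=
    hasProjectiveDimensionLE_of_flat hdim.le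
  exact ⟨nonempty_finiteProjectiveResolution, cotorsionDimLE_of_flat hdim.le⟩
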